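/- Let P_X be a pmf on 𝒳 = {0,…,m_x} with full support that is symmetric and unimodal around ⌊m_x/2⌋, i.e., P_X(⌊m_x/2⌋) ≥ P_X(⌊m_x/2⌋+1) = P_X(⌊m_x/2⌋−1) ≥ P_X(⌊m_x/2⌋+2) = P_X(⌊m_x/2⌋−2) ≥ …. Let θ* be the minimizer of θ ↦ I(S − X; X) (X ~ P_X, S ~ θ independent) over pmfs θ on 𝒮 = {0,…,m_s}, and set m* = ⌊m_s/2⌋. Then θ* is almost symmetric and unimodal around m*: if m_s is even, θ*(m*) ≥ θ*(m*+1) = θ*(m*−1) ≥ θ*(m*+2) = θ*(m*−2) ≥ …, and if m_s is odd, θ*(m*) = θ*(m*+1) ≥ θ*(m*−1) = θ*(m*+2) ≥ θ*(m*−2) = …. -/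

import Mathlib

open Finset
open scoped Classical

namespace SmartMeter

/-! ### Basic information measures for finitely supported distributions.
All entropies and mutual informations are in bits (base-2 logarithms). -/

/-- Probability that the random variable `Z` takes the value `z` under the pmf `p`. -/
noncomputable def pr {Ω α : Type*} [Fintype Ω] [DecidableEq α]
    (p : Ω → ℝ) (Z : Ω → α) (z : α) : ℝ :=
  ∑ ω ∈ Finset.univ.filter (fun ω => Z ω = z), p ω

/-- Shannon entropy (in bits) of the random variable `Z` under the pmf `p`. -/
noncomputable def ent {Ω α : Type*} [Fintype Ω] [DecidableEq α]
    (p : Ω → ℝ) (Z : Ω → α) : ℝ :=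
  -∑ z ∈ Finset.univ.image Z, pr p Z z * Real.logb 2 (pr p Z z)

/-- Mutual information `I(A; B)`. -/
noncomputable def mutInfo {Ω α β : Type*} [Fintype Ω] [DecidableEq α] [DecidableEq β]
    (p : Ω → ℝ) (A : Ω → α) (B : Ω → β) : ℝ :=
  ent p A + ent p B - ent p (fun ω => (A ω, B ω))

/-- Conditional entropy `H(A | C)`. -/
noncomputable def condEnt {Ω α γ : Type*} [Fintype Ω] [DecidableEq α] [DecidableEq γ]
    (p : Ω → ℝ) (A : Ω → α) (C : Ω → γ) : ℝ :=
  ent p (fun ω => (A ω, C ω)) - ent p C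

/-- Conditional mutual information `I(A; B | C)`. -/
noncomputable def condMutInfo {Ω α β γ : Type*} [Fintype Ω] [DecidableEq α] [DecidableEq β]
    [DecidableEq γ] (p : Ω → ℝ) (A : Ω → α) (B : Ω → β) (C : Ω → γ) : ℝ :=
  ent p (fun ω => (A ω, C ω)) + ent p (fun ω => (B ω, C ω))
    - ent p (fun ω => (A ω, B ω, C ω)) - ent p C

/-- `p` is a probability mass function on the finite type `Ω`. -/
def IsPMF {Ω : Type*} [Fintype Ω] (p : Ω → ℝ) : Prop :=
  (∀ ω, 0 ≤ p ω) ∧ ∑ ω, p ω = 1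

/-- Extension of a pmf on `{0, …, n}` to an integer-indexed function (zero out of range). -/
noncomputable def extZ {n : ℕ} (f : Fin (n + 1) → ℝ) (k : ℤ) : ℝ :=
  if h : 0 ≤ k ∧ k ≤ (n : ℤ) then f ⟨k.toNat, by omega⟩ else 0

/-! ### The single-letter quantity `J*` -/

/-- `I(S - X; X)` for independent `X ~ PX` on `{0,…,mx}` and `S ~ θ` on `{0,…,ms}`. -/
noncomputable def iidMI (mx ms : ℕ) (PX : Fin (mx + 1) → ℝ) (θ : Fin (ms + 1) → ℝ) : ℝ :=
  mutInfo (fun ω : Fin (mx + 1) × Fin (ms + 1) => PX ω.1 * θ ω.2)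
    (fun ω => ((ω.2 : ℕ) : ℤ) - ((ω.1 : ℕ) : ℤ)) (fun ω => ω.1)

/-- `J* = min over pmfs θ on 𝒮 of I(S - X; X)`. -/
noncomputable def Jstar (mx ms : ℕ) (PX : Fin (mx + 1) → ℝ) : ℝ :=
  sInf {r : ℝ | ∃ θ : Fin (ms + 1) → ℝ, IsPMF θ ∧ iidMI mx ms PX θ = r}

/-! ### The structured policy `b*` -/

/-- `ξ(w) = Σ_{(x,s) : s - x = w} PX(x) θ(s)`, the pmf of `W = S - X`. -/
noncomputable def xiOf (mx ms : ℕ) (PX : Fin (mx + 1) → ℝ) (θ : Fin (ms + 1) → ℝ)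
    (w : ℤ) : ℝ :=
  ∑ x : Fin (mx + 1), ∑ s : Fin (ms + 1),
    if ((s : ℕ) : ℤ) - ((x : ℕ) : ℤ) = w then PX x * θ s else 0

/-- The structured policy with respect to `(θ, ξ)`:
`b(y|w) = PX(y) θ(y + w) / ξ(w)` for `y ∈ 𝒳 ∩ 𝒴₀(w)` (when `ξ(w) > 0`), else `0`. -/
noncomputable def bstar (mx my ms : ℕ) (PX : Fin (mx + 1) → ℝ) (θ : Fin (ms + 1) → ℝ)
    (w : ℤ) (y : Fin (my + 1)) : ℝ :=
  if xiOf mx ms PX θ w = 0 then 0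
  else extZ PX ((y : ℕ) : ℤ) * extZ θ (((y : ℕ) : ℤ) + w) / xiOf mx ms PX θ w

/-! ### Trajectory spaces, policies and induced joint laws.
Time is indexed from `0`; `ω = (s₁, x, y)` records the initial battery state `S₁ = ω.1`,
the demands `X_{t+1} = ω.2.1 t` and the outputs `Y_{t+1} = ω.2.2 t` for `t = 0, …, T-1`. -/

/-- Trajectories of horizon `T`. -/
abbrev Traj (mx my ms T : ℕ) :=
  Fin (ms + 1) × (Fin T → Fin (mx + 1)) × (Fin T → Fin (my + 1))

variable {mx my ms T : ℕ}

/-- Demand at (0-based) time `t`, as an integer (junk value `0` for `t ≥ T`). -/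
def Xat (ω : Traj mx my ms T) (t : ℕ) : ℤ :=
  if h : t < T then ((ω.2.1 ⟨t, h⟩ : ℕ) : ℤ) else 0

/-- Output at (0-based) time `t`, as an integer (junk value `0` for `t ≥ T`). -/
def Yat (ω : Traj mx my ms T) (t : ℕ) : ℤ :=
  if h : t < T then ((ω.2.2 ⟨t, h⟩ : ℕ) : ℤ) else 0

/-- Battery state at (0-based) time `t`: `S_{t+1} = S_t + Y_t - X_t`, `Sat ω 0 = S₁`. -/
def Sat (ω : Traj mx my ms T) (t : ℕ) : ℤ :=
  ((ω.1 : ℕ) : ℤ) + ∑ i ∈ Finset.range t, (Yat ω i - Xat ω i)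

/-- `W_t = S_t - X_t`. -/
def Wat (ω : Traj mx my ms T) (t : ℕ) : ℤ := Sat ω t - Xat ω t

/-- A general causal (class `Q_A`) randomized battery policy:
`q_t(y_t | x^t, s^t, y^{t-1})`; since `s^t` is determined by `(s₁, x^{t-1}, y^{t-1})`,
the policy is a function of `(x^t, s₁, y^{t-1})`. -/
def PolicyA (mx my ms : ℕ) : Type :=
  (t : ℕ) → (Fin (t + 1) → Fin (mx + 1)) → Fin (ms + 1) → (Fin t → Fin (my + 1)) →
    Fin (my + 1) → ℝ

/-- A class-`Q_B` policy: `q_t(y_t | x_t, s_t, y^{t-1})`. -/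
def PolicyB (mx my ms : ℕ) : Type :=
  (t : ℕ) → Fin (mx + 1) → ℤ → (Fin t → Fin (my + 1)) → Fin (my + 1) → ℝ

/-- The battery state `S_t` computed from `s₁` and the history `(x^t, y^{t-1})`. -/
def hstate {t : ℕ} (s1 : Fin (ms + 1)) (x : Fin (t + 1) → Fin (mx + 1))
    (y : Fin t → Fin (my + 1)) : ℤ :=
  ((s1 : ℕ) : ℤ) + ∑ i : Fin t, (((y i : ℕ) : ℤ) - ((x i.castSucc : ℕ) : ℤ))

/-- Each `q_t(· | x^t, s^t, y^{t-1})` is a pmf on `𝒴`. -/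
def CondPMFA (q : PolicyA mx my ms) : Prop :=
  ∀ (t : ℕ) (x : Fin (t + 1) → Fin (mx + 1)) (s1 : Fin (ms + 1)) (y : Fin t → Fin (my + 1)),
    (∀ yt, 0 ≤ q t x s1 y yt) ∧ ∑ yt, q t x s1 y yt = 1

/-- Feasibility of a class-`Q_A` policy: conditional pmfs supported on
`𝒴₀(s_t - x_t) = {y ∈ 𝒴 : s_t - x_t + y ∈ 𝒮}`. -/
def FeasibleA (q : PolicyA mx my ms) : Prop :=
  CondPMFA q ∧
  ∀ (t : ℕ) (x : Fin (t + 1) → Fin (mx + 1)) (s1 : Fin (ms + 1)) (y : Fin t → Fin (my + 1)),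
    ∀ yt, q t x s1 y yt ≠ 0 →
      0 ≤ hstate s1 x y - ((x (Fin.last t) : ℕ) : ℤ) + ((yt : ℕ) : ℤ) ∧
      hstate s1 x y - ((x (Fin.last t) : ℕ) : ℤ) + ((yt : ℕ) : ℤ) ≤ (ms : ℤ)

/-- Each `q_t(· | x_t, s_t, y^{t-1})` is a pmf on `𝒴`. -/
def CondPMFB (q : PolicyB mx my ms) : Prop :=
  ∀ (t : ℕ) (xt : Fin (mx + 1)) (s : ℤ) (y : Fin t → Fin (my + 1)),
    (∀ yt, 0 ≤ q t xt s y yt) ∧ ∑ yt, q t xt s y yt = 1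

/-- Feasibility of a class-`Q_B` policy. -/
def FeasibleB (q : PolicyB mx my ms) : Prop :=
  CondPMFB q ∧
  ∀ (t : ℕ) (xt : Fin (mx + 1)) (s : ℤ) (y : Fin t → Fin (my + 1)),
    0 ≤ s → s ≤ (ms : ℤ) →
    ∀ yt, q t xt s y yt ≠ 0 →
      0 ≤ s - ((xt : ℕ) : ℤ) + ((yt : ℕ) : ℤ) ∧
      s - ((xt : ℕ) : ℤ) + ((yt : ℕ) : ℤ) ≤ (ms : ℤ)

/-- The demand prefix `x^t = (x_0, …, x_t)` of a trajectory. -/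
def prefX (ω : Traj mx my ms T) (t : Fin T) : Fin ((t : ℕ) + 1) → Fin (mx + 1) :=
  fun i => ω.2.1 ⟨(i : ℕ), lt_of_le_of_lt (Nat.lt_succ_iff.mp i.isLt) t.isLt⟩

/-- The output prefix `y^{t-1} = (y_0, …, y_{t-1})` of a trajectory. -/
def prefY (ω : Traj mx my ms T) (t : Fin T) : Fin (t : ℕ) → Fin (my + 1) :=
  fun i => ω.2.2 ⟨(i : ℕ), i.isLt.trans t.isLt⟩

/-- Joint law on trajectories induced by i.i.d. demand `PX`, initial battery pmf `PS1`
(independent of the demand), and a class-`Q_A` policy `q`. -/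
noncomputable def jointA (PS1 : Fin (ms + 1) → ℝ) (PX : Fin (mx + 1) → ℝ)
    (q : PolicyA mx my ms) (T : ℕ) (ω : Traj mx my ms T) : ℝ :=
  PS1 ω.1 * ∏ t : Fin T,
    (PX (ω.2.1 t) * q (t : ℕ) (prefX ω t) ω.1 (prefY ω t) (ω.2.2 t))

/-- Weight of a demand trajectory under a Markov chain `(PX1, Qm)`. -/
noncomputable def markovWt (PX1 : Fin (mx + 1) → ℝ) (Qm : Fin (mx + 1) → Fin (mx + 1) → ℝ)
    {T : ℕ} (x : Fin T → Fin (mx + 1)) : ℝ :=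
  ∏ t : Fin T,
    if _h : (t : ℕ) = 0 then PX1 (x t)
    else Qm (x ⟨(t : ℕ) - 1, lt_of_le_of_lt (Nat.sub_le _ _) t.isLt⟩) (x t)

/-- Joint law on trajectories induced by Markov demand and a class-`Q_A` policy. -/
noncomputable def jointAMarkov (PS1 : Fin (ms + 1) → ℝ) (PX1 : Fin (mx + 1) → ℝ)
    (Qm : Fin (mx + 1) → Fin (mx + 1) → ℝ) (q : PolicyA mx my ms) (T : ℕ)
    (ω : Traj mx my ms T) : ℝ :=
  PS1 ω.1 * markovWt PX1 Qm ω.2.1 *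
    ∏ t : Fin T, q (t : ℕ) (prefX ω t) ω.1 (prefY ω t) (ω.2.2 t)

/-- Joint law on trajectories induced by Markov demand and a class-`Q_B` policy. -/
noncomputable def jointBMarkov (PS1 : Fin (ms + 1) → ℝ) (PX1 : Fin (mx + 1) → ℝ)
    (Qm : Fin (mx + 1) → Fin (mx + 1) → ℝ) (q : PolicyB mx my ms) (T : ℕ)
    (ω : Traj mx my ms T) : ℝ :=
  PS1 ω.1 * markovWt PX1 Qm ω.2.1 *
    ∏ t : Fin T, q (t : ℕ) (ω.2.1 t) (Sat ω (t : ℕ)) (prefY ω t) (ω.2.2 t)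

/-- The memoryless time-invariant policy `q_t(y | x, s) = b*(y | s - x)`, as a member of the
class of general causal policies. -/
noncomputable def structuredPolicyA (mx my ms : ℕ) (PX : Fin (mx + 1) → ℝ)
    (θ : Fin (ms + 1) → ℝ) : PolicyA mx my ms :=
  fun t x s1 y yt => bstar mx my ms PX θ (hstate s1 x y - ((x (Fin.last t) : ℕ) : ℤ)) yt

/-!
Fix `C ≥ m_s` and polarize `θ` about `C / 2`: of the two values at `s` and `C - s`, move the larger
one to the left. This permutes the values of `θ`, so `H(S)` is unchanged. Since `P_X` is symmetric
and unimodal, the outputs `w` of `S - X` also come in mirror pairs, and the rearrangement inequality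
shows that polarization spreads the two probabilities of each pair apart while preserving their sum;
as `-x log x` is concave, `H(S - X)` does not increase. Hence every polarization of a minimizer is
again a minimizer, and so is its reflection `s ↦ m_s - s`.

The minimizer is unique. It has full support, because `-x log x` has infinite slope at `0`. If `θ`
and `φ` are both minimizers, every log-sum inequality between them is tight, so `θ / φ` takes the
same value at any two inputs that can produce a common output, hence is constant. A minimizer
therefore equals its reflection and all its polarizations; taking `C = k + l` with `k ≤ l` gives
`θ l ≤ θ k`.
-/

open Real Matrix

section Convexity

lemma concaveOn_map_add_map_le {𝕜 : Type*} [Field 𝕜] [LinearOrder 𝕜] [IsStrictOrderedRing 𝕜]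
    {s : Set 𝕜} {Φ : 𝕜 → 𝕜} (hΦ : ConcaveOn 𝕜 s Φ) {x y u v : 𝕜} (hx : x ∈ s) (hy : y ∈ s)
    (hxu : x ≤ u) (huy : u ≤ y) (hsum : u + v = x + y) : Φ x + Φ y ≤ Φ u + Φ v := by
  rcases (hxu.trans huy).eq_or_lt with rfl | hxy
  · obtain rfl : u = x := le_antisymm huy hxu
    obtain rfl : v = u := add_left_cancel hsum
    exact le_rfl
  obtain ⟨a, b, ha, hb, hab, rfl⟩ : u ∈ segment 𝕜 x y := segment_eq_Icc hxy.le ▸ ⟨hxu, huy⟩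
  obtain rfl : v = b • x + a • y := by
    simp only [smul_eq_mul] at hsum ⊢
    linear_combination hsum - (x + y) * hab
  have hu := hΦ.2 hx hy ha hb hab
  have hv := hΦ.2 hx hy hb ha (by rwa [add_comm])
  simp only [smul_eq_mul] at hu hv ⊢
  linear_combination hu + hv - (Φ x + Φ y) * hab

/-- The deficit in the log-sum inequality for `a / c` and `b / d`. It is only meaningful for
nonnegative arguments such that `c = 0` forces `a = 0` and `d = 0` forces `b = 0`; under the
convention `x / 0 = 0` it then vanishes as soon as `c = 0` or `d = 0`. -/
noncomputable def logSumGap (a b c d : ℝ) : ℝ :=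
  a * log (a / c) + b * log (b / d) - (a + b) * log ((a + b) / (c + d))

lemma logSumGap_eq_jensen {a b c d : ℝ} (hc : 0 < c) (hd : 0 < d) :
    logSumGap a b c d = (c + d) * (c / (c + d) * (a / c * log (a / c))
      + d / (c + d) * (b / d * log (b / d))
      - (c / (c + d) * (a / c) + d / (c + d) * (b / d)) *
        log (c / (c + d) * (a / c) + d / (c + d) * (b / d))) := by
  have hmean : c / (c + d) * (a / c) + d / (c + d) * (b / d) = (a + b) / (c + d) := by
    field_simp
  rw [hmean, logSumGap]
  field_simp

lemma logSumGap_nonneg {a b c d : ℝ} (ha : 0 ≤ a) (hb : 0 ≤ b) (hc : 0 ≤ c) (hd : 0 ≤ d)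
    (hca : c = 0 → a = 0) (hdb : d = 0 → b = 0) : 0 ≤ logSumGap a b c d := by
  rcases hc.eq_or_lt' with hc₀ | hc₀
  · simp [logSumGap, hc₀, hca hc₀]
  rcases hd.eq_or_lt' with hd₀ | hd₀
  · simp [logSumGap, hd₀, hdb hd₀]
  rw [logSumGap_eq_jensen hc₀ hd₀]
  have hconv := convexOn_mul_log.2 (div_nonneg ha hc) (div_nonneg hb hd)
    (div_nonneg hc (add_nonneg hc hd)) (div_nonneg hd (add_nonneg hc hd))
    (by rw [← add_div, div_self (by positivity)])
  exact mul_nonneg (by positivity) (sub_nonneg.2 hconv)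

lemma mul_eq_mul_of_logSumGap_nonpos {a b c d : ℝ} (ha : 0 ≤ a) (hb : 0 ≤ b) (hc : 0 < c)
    (hd : 0 < d) (hgap : logSumGap a b c d ≤ 0) : a * d = b * c := by
  by_contra hne
  have hconv := strictConvexOn_mul_log.2 (div_nonneg ha hc.le) (div_nonneg hb hd.le)
    (fun h => hne ((div_eq_div_iff hc.ne' hd.ne').1 h)) (div_pos hc (add_pos hc hd))
    (div_pos hd (add_pos hc hd)) (by rw [← add_div, div_self (by positivity)])
  refine hgap.not_gt ?_
  rw [logSumGap_eq_jensen hc hd]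
  exact mul_pos (by positivity) (sub_pos.2 hconv)

lemma logSumGap_zero_left {b c d : ℝ} (hb : 0 < b) (hc : 0 < c) (hd : 0 < d) :
    logSumGap 0 b c d = b * log ((c + d) / d) := by
  rw [logSumGap, zero_mul, zero_add, zero_add, ← mul_sub,
    ← log_div (by positivity) (by positivity)]
  congr 2
  field_simp

end Convexity

section Channel

variable {α β : Type*} {W : Finset β} {K : Matrix β α ℝ} {θ φ : α → ℝ}

/-- `K` is a channel all of whose outputs lie in the finite set `W`. -/
structure IsChannel (W : Finset β) (K : Matrix β α ℝ) : Prop where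
  nonneg : ∀ w s, 0 ≤ K w s
  sum_eq_one : ∀ s, ∑ w ∈ W, K w s = 1

/-- Shannon's confusability graph of a channel: two inputs are adjacent if some output in `W` can
arise from both. -/
def confusabilityGraph (W : Finset β) (K : Matrix β α ℝ) : SimpleGraph α :=
  .fromRel fun s s' => ∃ w ∈ W, 0 < K w s ∧ 0 < K w s'

lemma exists_pos_of_confusabilityGraph_adj {s s' : α} (h : (confusabilityGraph W K).Adj s s') :
    ∃ w ∈ W, 0 < K w s ∧ 0 < K w s' := by
  rcases h.2 with h | ⟨w, hw, hs', hs⟩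
  exacts [h, ⟨w, hw, hs, hs'⟩]

lemma preconnected_propagate {G : SimpleGraph α} (hG : G.Preconnected) {p : α → Prop}
    (hp : ∀ s s', G.Adj s s' → p s → p s') {s : α} (hs : p s) (s' : α) : p s' := by
  induction (G.reachable_iff_reflTransGen s s').1 (hG s s') with
  | refl => exact hs
  | tail _ hadj ih => exact hp _ _ hadj ih

variable [Fintype α]

/-- The entropy `H(K θ) - H(θ)` (in nats) gained by the input distribution `θ` when it is sent
through the channel `K`, where `K w s` is the probability of the output `w` given the input `s`.
The output alphabet `β` may be infinite; only outputs in the finite set `W` are counted. -/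
noncomputable def entropyGain (W : Finset β) (K : Matrix β α ℝ) (θ : α → ℝ) : ℝ :=
  ∑ w ∈ W, negMulLog ((K *ᵥ θ) w) - ∑ s, negMulLog (θ s)

lemma mulVec_nonneg (hK : ∀ w s, 0 ≤ K w s) (hθ : ∀ s, 0 ≤ θ s) (w : β) : 0 ≤ (K *ᵥ θ) w :=
  Finset.sum_nonneg fun s _ => mul_nonneg (hK w s) (hθ s)

lemma mulVec_pos (hK : ∀ w s, 0 ≤ K w s) (hθ : ∀ s, 0 ≤ θ s) {w : β} {s : α} (hKs : 0 < K w s)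
    (hs : 0 < θ s) : 0 < (K *ᵥ θ) w :=
  Finset.sum_pos' (fun s _ => mul_nonneg (hK w s) (hθ s)) ⟨s, mem_univ s, mul_pos hKs hs⟩

lemma sum_mulVec (hK : IsChannel W K) (θ : α → ℝ) : ∑ w ∈ W, (K *ᵥ θ) w = ∑ s, θ s := by
  simp only [mulVec, dotProduct]
  rw [Finset.sum_comm]
  simp only [← Finset.sum_mul, hK.sum_eq_one, one_mul]

lemma entropyGain_smul (hK : IsChannel W K) (t : ℝ) (θ : α → ℝ) :
    entropyGain W K (t • θ) = t * entropyGain W K θ := by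
  simp only [entropyGain, mulVec_smul, Pi.smul_apply, smul_eq_mul, negMulLog_mul,
    Finset.sum_add_distrib, ← Finset.mul_sum, ← Finset.sum_mul, sum_mulVec hK]
  ring

lemma entropyGain_eq_sum (hK : IsChannel W K) (hθ : ∀ s, 0 ≤ θ s) :
    entropyGain W K θ = ∑ w ∈ W, ∑ s, K w s * (θ s * log (θ s / (K *ᵥ θ) w)) := by
  have hlog (w s) : K w s * (θ s * log (θ s / (K *ᵥ θ) w))
      = K w s * (θ s * log (θ s)) - K w s * θ s * log ((K *ᵥ θ) w) := by
    rcases (hK.nonneg w s).eq_or_lt' with hKs | hKs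
    · simp [hKs]
    rcases (hθ s).eq_or_lt' with hs | hs
    · simp [hs]
    rw [log_div hs.ne' (mulVec_pos hK.nonneg hθ hKs hs).ne']
    ring
  have hin : ∑ w ∈ W, ∑ s, K w s * (θ s * log (θ s)) = -∑ s, negMulLog (θ s) := by
    rw [Finset.sum_comm]
    simp only [← Finset.sum_mul, hK.sum_eq_one, one_mul, negMulLog, neg_mul,
      Finset.sum_neg_distrib, neg_neg]
  have hout (w) : ∑ s, K w s * θ s * log ((K *ᵥ θ) w) = -negMulLog ((K *ᵥ θ) w) := by
    rw [← Finset.sum_mul, negMulLog, neg_mul, neg_neg]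
    rfl
  simp only [hlog, Finset.sum_sub_distrib, hin, hout, Finset.sum_neg_distrib, entropyGain]
  ring

lemma entropyGain_add_sub_eq_sum_logSumGap (hK : IsChannel W K) (hθ : ∀ s, 0 ≤ θ s)
    (hφ : ∀ s, 0 ≤ φ s) :
    entropyGain W K θ + entropyGain W K φ - entropyGain W K (θ + φ)
      = ∑ w ∈ W, ∑ s, K w s * logSumGap (θ s) (φ s) ((K *ᵥ θ) w) ((K *ᵥ φ) w) := by
  have hadd : ∀ s, 0 ≤ (θ + φ) s := fun s => add_nonneg (hθ s) (hφ s)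
  simp only [entropyGain_eq_sum hK hθ, entropyGain_eq_sum hK hφ, entropyGain_eq_sum hK hadd,
    ← Finset.sum_add_distrib, ← Finset.sum_sub_distrib, mulVec_add, Pi.add_apply, logSumGap]
  exact Finset.sum_congr rfl fun w _ => Finset.sum_congr rfl fun s _ => by ring

lemma mul_logSumGap_nonneg (hK : IsChannel W K) (hθ : ∀ s, 0 ≤ θ s) (hφ : ∀ s, 0 ≤ φ s) (w : β)
    (s : α) : 0 ≤ K w s * logSumGap (θ s) (φ s) ((K *ᵥ θ) w) ((K *ᵥ φ) w) := by
  rcases (hK.nonneg w s).eq_or_lt' with hKs | hKs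
  · simp [hKs]
  have hzero {ψ : α → ℝ} (hψ : ∀ s, 0 ≤ ψ s) (hw : (K *ᵥ ψ) w = 0) : ψ s = 0 :=
    (hψ s).antisymm' <| not_lt.1 fun hs => (mulVec_pos hK.nonneg hψ hKs hs).ne' hw
  exact mul_nonneg hKs.le <| logSumGap_nonneg (hθ s) (hφ s) (mulVec_nonneg hK.nonneg hθ w)
    (mulVec_nonneg hK.nonneg hφ w) (hzero hθ) (hzero hφ)

lemma mul_logSumGap_le (hK : IsChannel W K) (hθ : ∀ s, 0 ≤ θ s) (hφ : ∀ s, 0 ≤ φ s) {w : β}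
    (hw : w ∈ W) (s : α) :
    K w s * logSumGap (θ s) (φ s) ((K *ᵥ θ) w) ((K *ᵥ φ) w)
      ≤ entropyGain W K θ + entropyGain W K φ - entropyGain W K (θ + φ) := by
  have hnonneg := mul_logSumGap_nonneg hK hθ hφ
  rw [entropyGain_add_sub_eq_sum_logSumGap hK hθ hφ]
  exact (Finset.single_le_sum (fun s _ => hnonneg w s) (mem_univ s)).trans
    (Finset.single_le_sum (f := fun w => ∑ s, K w s * logSumGap (θ s) (φ s) _ _)
      (fun w _ => Finset.sum_nonneg fun s _ => hnonneg w s) hw)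

lemma entropyGain_mul_sum_le_of_isMinOn (hK : IsChannel W K)
    (hmin : IsMinOn (entropyGain W K) {θ | IsPMF θ} θ) (hφ : ∀ s, 0 ≤ φ s) :
    entropyGain W K θ * ∑ s, φ s ≤ entropyGain W K φ := by
  rcases (Finset.sum_nonneg fun s _ => hφ s).eq_or_lt' with hmass | hmass
  · obtain rfl : φ = 0 := funext fun s =>
      (Finset.sum_eq_zero_iff_of_nonneg fun s _ => hφ s).1 hmass s (mem_univ s)
    simp [entropyGain]
  have hpmf : IsPMF ((∑ s, φ s)⁻¹ • φ) :=
    ⟨fun s => mul_nonneg (inv_nonneg.2 hmass.le) (hφ s), by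
      simp only [Pi.smul_apply, smul_eq_mul, ← Finset.mul_sum, inv_mul_cancel₀ hmass.ne']⟩
  have hle := isMinOn_iff.1 hmin _ hpmf
  rwa [entropyGain_smul hK, ← div_eq_inv_mul, le_div_iff₀ hmass] at hle

lemma mul_logSumGap_le_of_isMinOn (hK : IsChannel W K) (hθ : IsPMF θ)
    (hmin : IsMinOn (entropyGain W K) {θ | IsPMF θ} θ) (hφ : ∀ s, 0 ≤ φ s) {w : β} (hw : w ∈ W)
    (s : α) :
    K w s * logSumGap (θ s) (φ s) ((K *ᵥ θ) w) ((K *ᵥ φ) w)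
      ≤ entropyGain W K φ - entropyGain W K θ * ∑ s, φ s := by
  have hadd := entropyGain_mul_sum_le_of_isMinOn hK hmin
    (φ := θ + φ) fun s => add_nonneg (hθ.1 s) (hφ s)
  simp only [Pi.add_apply, Finset.sum_add_distrib, hθ.2] at hadd
  linarith [mul_logSumGap_le hK hθ.1 hφ hw s]

-- Adding mass `t` at an unused input costs `O(t)`, but gains a term of order `t log (1 / t)`
-- if the input can be confused with a used one.
lemma pos_of_isMinOn_of_adj (hK : IsChannel W K) (hθ : IsPMF θ)
    (hmin : IsMinOn (entropyGain W K) {θ | IsPMF θ} θ) {s s' : α}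
    (hadj : (confusabilityGraph W K).Adj s s') (hs : 0 < θ s) : 0 < θ s' := by
  obtain ⟨w, hw, hKs, hKs'⟩ := exists_pos_of_confusabilityGraph_adj hadj
  by_contra hs'
  replace hs' : θ s' = 0 := (hθ.1 s').antisymm' (not_lt.1 hs')
  set ξ := (K *ᵥ θ) w with hξ
  have hξpos : 0 < ξ := mulVec_pos hK.nonneg hθ.1 hKs hs
  set δ : α → ℝ := Pi.single s' 1
  have hδ : 0 ≤ δ := Pi.single_nonneg.2 zero_le_one
  set B := (entropyGain W K δ - entropyGain W K θ) / K w s' with hB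
  have hbound (t : ℝ) (ht : 0 < t) : log ((ξ + t * K w s') / (t * K w s')) ≤ B := by
    have hgap := mul_logSumGap_le_of_isMinOn hK hθ hmin (φ := t • δ)
      (fun r => mul_nonneg ht.le (hδ r)) hw s'
    have hδsum : ∑ r, (t • δ) r = t := by simp [δ, ← Finset.mul_sum]
    have hδout : (K *ᵥ (t • δ)) w = t * K w s' := by simp [δ, mulVec_smul]
    have hδs' : (t • δ) s' = t := by simp [δ]
    rw [hδsum, hδout, hδs', hs', ← hξ, entropyGain_smul hK,
      logSumGap_zero_left ht hξpos (mul_pos ht hKs')] at hgap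
    rw [hB, le_div_iff₀ hKs']
    exact le_of_mul_le_mul_left (by linarith) ht
  have hB' := hbound (ξ * exp (-B) / K w s') (by positivity)
  have hratio : (ξ + ξ * exp (-B)) / (ξ * exp (-B)) = exp B + 1 := by
    rw [Real.exp_neg]
    field_simp
  rw [div_mul_cancel₀ _ hKs'.ne', hratio] at hB'
  exact absurd ((log_le_iff_le_exp (by positivity)).1 hB') (by linarith)

lemma pos_of_isMinOn (hK : IsChannel W K) (hconn : (confusabilityGraph W K).Preconnected)
    (hθ : IsPMF θ) (hmin : IsMinOn (entropyGain W K) {θ | IsPMF θ} θ) (s : α) : 0 < θ s := by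
  obtain ⟨s₀, -, hs₀⟩ : ∃ s₀ ∈ univ, 0 < θ s₀ :=
    (Finset.sum_pos_iff_of_nonneg fun s _ => hθ.1 s).1 (hθ.2 ▸ zero_lt_one)
  exact preconnected_propagate hconn
    (fun _ _ hadj => pos_of_isMinOn_of_adj hK hθ hmin hadj) hs₀ s

lemma div_eq_div_of_isMinOn_of_adj (hK : IsChannel W K)
    (hconn : (confusabilityGraph W K).Preconnected) (hθ : IsPMF θ) (hφ : IsPMF φ)
    (hθmin : IsMinOn (entropyGain W K) {θ | IsPMF θ} θ)
    (hφmin : IsMinOn (entropyGain W K) {θ | IsPMF θ} φ) {s s' : α}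
    (hadj : (confusabilityGraph W K).Adj s s') : θ s / φ s = θ s' / φ s' := by
  obtain ⟨w, hw, hKs, hKs'⟩ := exists_pos_of_confusabilityGraph_adj hadj
  have hθpos := pos_of_isMinOn hK hconn hθ hθmin
  have hφpos := pos_of_isMinOn hK hconn hφ hφmin
  have hθw := mulVec_pos hK.nonneg hθ.1 hKs (hθpos s)
  have hφw := mulVec_pos hK.nonneg hφ.1 hKs (hφpos s)
  have hratio (r : α) (hr : 0 < K w r) : θ r / φ r = (K *ᵥ θ) w / (K *ᵥ φ) w := by
    have hgap := mul_logSumGap_le_of_isMinOn hK hθ hθmin hφ.1 hw r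
    rw [hφ.2, mul_one] at hgap
    have hgap₀ : logSumGap (θ r) (φ r) ((K *ᵥ θ) w) ((K *ᵥ φ) w) ≤ 0 :=
      nonpos_of_mul_nonpos_right (hgap.trans (sub_nonpos.2 (isMinOn_iff.1 hφmin θ hθ))) hr
    rw [div_eq_div_iff (hφpos r).ne' hφw.ne',
      mul_eq_mul_of_logSumGap_nonpos (hθ.1 r) (hφ.1 r) hθw hφw hgap₀, mul_comm]
  rw [hratio s hKs, hratio s' hKs']

theorem eq_of_isMinOn_entropyGain (hK : IsChannel W K)
    (hconn : (confusabilityGraph W K).Preconnected) (hθ : IsPMF θ) (hφ : IsPMF φ)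
    (hθmin : IsMinOn (entropyGain W K) {θ | IsPMF θ} θ)
    (hφmin : IsMinOn (entropyGain W K) {θ | IsPMF θ} φ) : θ = φ := by
  have hφpos := pos_of_isMinOn hK hconn hφ hφmin
  funext s
  have hconst (r : α) : θ r = θ s / φ s * φ r := by
    rw [← div_eq_iff (hφpos r).ne']
    exact preconnected_propagate (p := fun r => θ r / φ r = θ s / φ s) hconn
      (fun _ _ hadj h => by
        rw [← h, div_eq_div_of_isMinOn_of_adj hK hconn hθ hφ hθmin hφmin hadj]) rfl r
  have hone : θ s / φ s = 1 := by
    have hsum := hθ.2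
    rwa [Finset.sum_congr rfl fun r _ => hconst r, ← Finset.mul_sum, hφ.2, mul_one] at hsum
  rw [hconst s, hone, one_mul]

lemma entropyGain_comp_equiv {e : α ≃ α} {τ : β ≃ β} (hW : ∀ w, w ∈ W ↔ τ w ∈ W)
    (hK : ∀ w s, K (τ w) (e s) = K w s) (θ : α → ℝ) :
    entropyGain W K (θ ∘ e) = entropyGain W K θ := by
  have hout (w : β) : (K *ᵥ (θ ∘ e)) w = (K *ᵥ θ) (τ w) := by
    simp only [mulVec, dotProduct, ← hK w, Function.comp_apply]
    exact e.sum_comp fun s => K (τ w) s * θ s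
  rw [entropyGain, entropyGain]
  congr 1
  · exact Finset.sum_equiv τ hW fun w _ => by rw [hout]
  · exact e.sum_comp fun s => negMulLog (θ s)

end Channel

section Polarization

variable {A W : Finset ℤ} {c C : ℤ} {P f k : ℤ → ℝ} {Φ : ℝ → ℝ}

lemma sum_reflect (hA : ∀ t ∈ A, c - t ∈ A) (g : ℤ → ℝ) : ∑ t ∈ A, g (c - t) = ∑ t ∈ A, g t :=
  Finset.sum_nbij' (c - ·) (c - ·) hA hA (by simp) (by simp) (by simp)

lemma sum_le_sum_of_add_reflect_le {g g' : ℤ → ℝ} (hA : ∀ t ∈ A, c - t ∈ A)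
    (h : ∀ t, 2 * t ≤ c → g t + g (c - t) ≤ g' t + g' (c - t)) : ∑ t ∈ A, g t ≤ ∑ t ∈ A, g' t := by
  have hpair (t : ℤ) : g t + g (c - t) ≤ g' t + g' (c - t) := by
    rcases le_total (2 * t) c with ht | ht
    · exact h t ht
    · simpa only [sub_sub_cancel, add_comm] using h (c - t) (by omega)
  have hsum := Finset.sum_le_sum fun t (_ : t ∈ A) => hpair t
  simp only [Finset.sum_add_distrib, sum_reflect hA] at hsum
  linarith

lemma sum_eq_sum_of_add_reflect_eq {g g' : ℤ → ℝ} (hA : ∀ t ∈ A, c - t ∈ A)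
    (h : ∀ t, 2 * t ≤ c → g t + g (c - t) = g' t + g' (c - t)) : ∑ t ∈ A, g t = ∑ t ∈ A, g' t :=
  le_antisymm (sum_le_sum_of_add_reflect_le hA fun t ht => (h t ht).le)
    (sum_le_sum_of_add_reflect_le hA fun t ht => (h t ht).ge)

lemma exists_reflect_invariant_superset (a b c : ℤ) :
    ∃ A : Finset ℤ, Icc a b ⊆ A ∧ ∀ t ∈ A, c - t ∈ A :=
  ⟨Icc (min a (c - b)) (max b (c - a)), fun t ht => by simp only [Finset.mem_Icc] at *; omega,
    fun t ht => by simp only [Finset.mem_Icc] at *; omega⟩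

/-- The polarization (two-point symmetrization) of `f` about `c / 2`: of the two values of `f` at
`s` and at its mirror image `c - s`, the larger one is moved to the left of `c / 2`. -/
noncomputable def polarize (c : ℤ) (f : ℤ → ℝ) (s : ℤ) : ℝ :=
  if 2 * s ≤ c then max (f s) (f (c - s)) else min (f s) (f (c - s))

lemma polarize_of_le {s : ℤ} (hs : 2 * s ≤ c) : polarize c f s = max (f s) (f (c - s)) :=
  if_pos hs

lemma polarize_reflect_of_le {s : ℤ} (hs : 2 * s ≤ c) :
    polarize c f (c - s) = min (f s) (f (c - s)) := by
  rcases hs.eq_or_lt with rfl | hs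
  · simp [polarize, two_mul]
  · rw [polarize, if_neg (by omega), sub_sub_cancel, min_comm]

lemma polarize_comp_reflect (c : ℤ) (f : ℤ → ℝ) :
    polarize c (fun s => f (c - s)) = polarize c f := by
  funext s
  simp only [polarize, sub_sub_cancel, max_comm, min_comm]

lemma polarize_nonneg (hf : ∀ s, 0 ≤ f s) (s : ℤ) : 0 ≤ polarize c f s := by
  rw [polarize]
  split_ifs
  exacts [le_max_of_le_left (hf s), le_min (hf s) (hf _)]

lemma map_polarize_add_map_polarize_reflect {s : ℤ} (hs : 2 * s ≤ c) (g : ℝ → ℝ) :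
    g (polarize c f s) + g (polarize c f (c - s)) = g (f s) + g (f (c - s)) := by
  rw [polarize_of_le hs, polarize_reflect_of_le hs]
  rcases le_total (f s) (f (c - s)) with h | h <;> simp [h, add_comm]

lemma sum_map_polarize (hA : ∀ t ∈ A, c - t ∈ A) (g : ℝ → ℝ) (f : ℤ → ℝ) :
    ∑ t ∈ A, g (polarize c f t) = ∑ t ∈ A, g (f t) :=
  sum_eq_sum_of_add_reflect_eq hA fun _ ht => map_polarize_add_map_polarize_reflect ht g

lemma sum_mul_le_sum_mul_polarize (hA : ∀ t ∈ A, c - t ∈ A)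
    (hk : ∀ t, 2 * t ≤ c → k (c - t) ≤ k t) (f : ℤ → ℝ) :
    ∑ t ∈ A, k t * f t ≤ ∑ t ∈ A, k t * polarize c f t := by
  refine sum_le_sum_of_add_reflect_le hA fun t ht => ?_
  rw [polarize_of_le ht, polarize_reflect_of_le ht]
  rcases le_total (f (c - t)) (f t) with hf | hf
  · simp [hf]
  · rw [max_eq_right hf, min_eq_left hf, add_comm, add_comm (k t * _)]
    exact mul_add_mul_le_mul_add_mul (hk t ht) hf

lemma sum_mul_polarize_add_sum_reflect_mul_polarize (hA : ∀ t ∈ A, c - t ∈ A) (k f : ℤ → ℝ) :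
    ∑ t ∈ A, k t * polarize c f t + ∑ t ∈ A, k (c - t) * polarize c f t
      = ∑ t ∈ A, k t * f t + ∑ t ∈ A, k (c - t) * f t := by
  simp only [← Finset.sum_add_distrib]
  refine sum_eq_sum_of_add_reflect_eq hA fun t ht => ?_
  simp only [sub_sub_cancel]
  have hpair : polarize c f t + polarize c f (c - t) = f t + f (c - t) :=
    map_polarize_add_map_polarize_reflect ht id
  linear_combination (k t + k (c - t)) * hpair

-- Polarization spreads the two sums apart while preserving their total.
lemma map_sum_mul_polarize_add_le (hΦ : ConcaveOn ℝ (Set.Ici 0) Φ) (hA : ∀ t ∈ A, c - t ∈ A)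
    (hk₀ : ∀ t, 0 ≤ k t) (hf : ∀ t, 0 ≤ f t) (hk : ∀ t, 2 * t ≤ c → k (c - t) ≤ k t) :
    Φ (∑ t ∈ A, k t * polarize c f t) + Φ (∑ t ∈ A, k (c - t) * polarize c f t)
      ≤ Φ (∑ t ∈ A, k t * f t) + Φ (∑ t ∈ A, k (c - t) * f t) := by
  have htotal := sum_mul_polarize_add_sum_reflect_mul_polarize hA k f
  have hle := sum_mul_le_sum_mul_polarize hA hk f
  have hle' := sum_mul_le_sum_mul_polarize hA hk fun t => f (c - t)
  rw [polarize_comp_reflect, ← sum_reflect hA] at hle'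
  simp only [sub_sub_cancel] at hle'
  rw [add_comm (Φ _)]
  exact concaveOn_map_add_map_le hΦ
    (Finset.sum_nonneg fun t _ => mul_nonneg (hk₀ _) (polarize_nonneg hf t))
    (Finset.sum_nonneg fun t _ => mul_nonneg (hk₀ t) (polarize_nonneg hf t))
    (by linarith) hle (by linarith)

/-- `f` is symmetric and unimodal around `c / 2`: it decreases with the distance to `c / 2`.
The parameter `c` is twice the center, so that half-integer centers are allowed. -/
def SymmUnimodal (c : ℤ) (f : ℤ → ℝ) : Prop :=
  ∀ ⦃k l : ℤ⦄, (2 * k - c).natAbs ≤ (2 * l - c).natAbs → f l ≤ f k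

lemma SymmUnimodal.eq (hf : SymmUnimodal c f) {k l : ℤ}
    (h : (2 * k - c).natAbs = (2 * l - c).natAbs) : f k = f l :=
  le_antisymm (hf h.ge) (hf h.le)

lemma symmUnimodal_of_reflect_eq_of_le (hsymm : ∀ k, f (c - k) = f k)
    (hle : ∀ k l, k ≤ l → c ≤ k + l → f l ≤ f k) : SymmUnimodal c f := by
  intro k l h
  rcases le_total c (2 * l) with hl | hl
  · exact hle k l (by omega) (by omega)
  · exact hsymm l ▸ hle k (c - l) (by omega) (by omega)

lemma symmUnimodal_two_mul {m : ℤ} (hsymm : ∀ k : ℕ, f (m + k) = f (m - k))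
    (hanti : ∀ k : ℕ, f (m + k + 1) ≤ f (m + k)) : SymmUnimodal (2 * m) f := by
  have habs (k : ℤ) : f k = f (m + (k - m).natAbs) := by
    rcases le_total m k with h | h
    · congr 1; omega
    · rw [hsymm]; congr 1; omega
  have hantitone : Antitone fun k : ℕ => f (m + k) :=
    antitone_nat_of_succ_le fun k => by simpa [add_assoc] using hanti k
  intro k l h
  rw [habs k, habs l]
  exact hantitone (by omega)

theorem sum_map_sum_mul_polarize_le (hΦ : ConcaveOn ℝ (Set.Ici 0) Φ) (hP₀ : ∀ t, 0 ≤ P t)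
    (hP : SymmUnimodal c P) (hf : ∀ t, 0 ≤ f t) (hA : ∀ t ∈ A, C - t ∈ A)
    (hW : ∀ w ∈ W, C - c - w ∈ W) :
    ∑ w ∈ W, Φ (∑ t ∈ A, P (t - w) * polarize C f t)
      ≤ ∑ w ∈ W, Φ (∑ t ∈ A, P (t - w) * f t) := by
  refine sum_le_sum_of_add_reflect_le hW fun w hw => ?_
  have hmirror (t : ℤ) : P (t - (C - c - w)) = P (C - t - w) := hP.eq (by omega)
  simp only [hmirror]
  exact map_sum_mul_polarize_add_le (k := fun t => P (t - w)) hΦ hA (fun _ => hP₀ _) hf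
    fun t ht => hP (by omega)

end Polarization

section ExtZ

variable {n : ℕ} {f : Fin (n + 1) → ℝ} {A : Finset ℤ}

lemma extZ_coe (f : Fin (n + 1) → ℝ) (i : Fin (n + 1)) : extZ f (i : ℕ) = f i := by
  simp [extZ, Nat.lt_succ_iff.1 i.isLt]

lemma extZ_of_notMem {k : ℤ} (hk : k ∉ Icc (0 : ℤ) n) : extZ f k = 0 :=
  dif_neg fun h => hk (Finset.mem_Icc.2 h)

lemma extZ_nonneg (hf : ∀ i, 0 ≤ f i) (k : ℤ) : 0 ≤ extZ f k := by
  rw [extZ]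
  split_ifs
  exacts [hf _, le_rfl]

lemma extZ_pos (hf : ∀ i, 0 < f i) {k : ℤ} (hk₀ : 0 ≤ k) (hkn : k ≤ n) : 0 < extZ f k := by
  rw [extZ, dif_pos ⟨hk₀, hkn⟩]
  exact hf _

lemma extZ_comp_rev (f : Fin (n + 1) → ℝ) (k : ℤ) : extZ (f ∘ Fin.rev) k = extZ f (n - k) := by
  by_cases hk : 0 ≤ k ∧ k ≤ n
  · rw [extZ, extZ, dif_pos hk, dif_pos (by omega)]
    exact congrArg f (Fin.ext (by simp only [Fin.val_rev]; omega))
  · rw [extZ, extZ, dif_neg hk, dif_neg (by omega)]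

lemma extZ_restrict {g : ℤ → ℝ} (hg : ∀ k ∉ Icc (0 : ℤ) n, g k = 0) :
    extZ (fun i : Fin (n + 1) => g (i : ℕ)) = g := by
  funext k
  rw [extZ]
  split_ifs with hk
  · simp [hk.1]
  · exact (hg k (by simpa using hk)).symm

lemma sum_extZ (hA : Icc (0 : ℤ) n ⊆ A) (f : Fin (n + 1) → ℝ) {g : ℤ → ℝ → ℝ}
    (hg : ∀ k, g k 0 = 0) : ∑ k ∈ A, g k (extZ f k) = ∑ i : Fin (n + 1), g (i : ℕ) (f i) := by
  refine (Finset.sum_of_injOn (fun i : Fin (n + 1) => ((i : ℕ) : ℤ)) (fun i _ j _ h => ?_)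
    (fun i _ => hA ?_) (fun k _ hk => ?_) (fun i _ => by rw [extZ_coe])).symm
  · exact Fin.ext (Nat.cast_injective h)
  · simp [Nat.lt_succ_iff.1 i.isLt]
  · rw [extZ_of_notMem, hg]
    intro hmem
    have hk₀ := Finset.mem_Icc.1 hmem
    exact hk ⟨⟨k.toNat, by omega⟩, by simp, Int.toNat_of_nonneg hk₀.1⟩

lemma extZ_eq_sum_ite (f : Fin (n + 1) → ℝ) (k : ℤ) :
    extZ f k = ∑ i : Fin (n + 1), if ((i : ℕ) : ℤ) = k then f i else 0 := by
  rw [← sum_extZ (g := fun j x => if j = k then x else 0)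
    (Finset.subset_insert k _) f (fun _ => ite_self 0)]
  simp

end ExtZ

section Entropy

variable {Ω γ : Type*} [Fintype Ω] [DecidableEq γ] {p : Ω → ℝ} {Z : Ω → γ}

lemma pr_eq_sum_ite (p : Ω → ℝ) (Z : Ω → γ) (z : γ) :
    pr p Z z = ∑ ω, if Z ω = z then p ω else 0 :=
  Finset.sum_filter _ _

lemma ent_mul_log_two {A : Finset γ} (hA : ∀ ω, Z ω ∈ A) :
    ent p Z * log 2 = ∑ z ∈ A, negMulLog (pr p Z z) := by
  have himage : univ.image Z ⊆ A := Finset.image_subset_iff.2 fun ω _ => hA ω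
  have hzero (z : γ) (hz : z ∉ univ.image Z) : pr p Z z = 0 :=
    Finset.sum_eq_zero fun ω hω =>
      absurd (Finset.mem_image.2 ⟨ω, mem_univ ω, (Finset.mem_filter.1 hω).2⟩) hz
  rw [← Finset.sum_subset himage fun z _ hz => by rw [hzero z hz, negMulLog_zero], ent,
    ← Finset.sum_neg_distrib, Finset.sum_mul]
  refine Finset.sum_congr rfl fun z _ => ?_
  rw [negMulLog, logb]
  field_simp

lemma ent_mul_log_two_of_injective (hZ : Function.Injective Z) (p : Ω → ℝ) :
    ent p Z * log 2 = ∑ ω, negMulLog (p ω) := by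
  rw [ent_mul_log_two fun ω => Finset.mem_image_of_mem Z (mem_univ ω),
    Finset.sum_image hZ.injOn]
  simp [pr_eq_sum_ite, hZ.eq_iff]

lemma sum_negMulLog_mul {ι κ : Type*} [Fintype ι] [Fintype κ] {p : ι → ℝ} {q : κ → ℝ}
    (hp : ∑ i, p i = 1) (hq : ∑ j, q j = 1) :
    ∑ ω : ι × κ, negMulLog (p ω.1 * q ω.2) = ∑ i, negMulLog (p i) + ∑ j, negMulLog (q j) := by
  simp only [Fintype.sum_prod_type, negMulLog_mul, Finset.sum_add_distrib, ← Finset.sum_mul,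
    ← Finset.mul_sum, hp, hq, one_mul]

end Entropy

section Difference

variable {PX : Fin (mx + 1) → ℝ} {θ φ : Fin (ms + 1) → ℝ} {A W : Finset ℤ} {c C : ℤ}

/-- The channel from `S` to `S - X`: the output `w` arises from the input `s` with probability
`PX (s - w)`. -/
noncomputable def diffKernel (ms : ℕ) (PX : Fin (mx + 1) → ℝ) : Matrix ℤ (Fin (ms + 1)) ℝ :=
  .of fun w s => extZ PX ((s : ℕ) - w)

lemma isChannel_diffKernel (hPX : IsPMF PX) (hW : Icc (-mx : ℤ) ms ⊆ W) :
    IsChannel W (diffKernel ms PX) where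
  nonneg w s := extZ_nonneg hPX.1 _
  sum_eq_one s := by
    have hinj : Function.Injective fun w : ℤ => (s : ℕ) - w := sub_right_injective
    have hsubset : Icc (0 : ℤ) mx ⊆ W.image fun w => (s : ℕ) - w := fun k hk =>
      Finset.mem_image.2 ⟨s - k, hW (by simp only [Finset.mem_Icc] at *; omega), by simp⟩
    have hsum := sum_extZ hsubset PX (g := fun _ x => x) fun _ => rfl
    rwa [Finset.sum_image hinj.injOn, hPX.2] at hsum

lemma diffKernel_mulVec (hA : Icc (0 : ℤ) ms ⊆ A) (θ : Fin (ms + 1) → ℝ) (w : ℤ) :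
    (diffKernel ms PX *ᵥ θ) w = ∑ t ∈ A, extZ PX (t - w) * extZ θ t :=
  (sum_extZ (g := fun t x => extZ PX (t - w) * x) hA θ fun _ => mul_zero _).symm

lemma preconnected_confusabilityGraph_diffKernel (hW : Icc (-mx : ℤ) ms ⊆ W)
    (hadj : ∃ k, 0 < extZ PX k ∧ 0 < extZ PX (k + 1)) :
    (confusabilityGraph W (diffKernel ms PX)).Preconnected := by
  obtain ⟨k, hk, hk'⟩ := hadj
  have hmem {j : ℤ} (hj : 0 < extZ PX j) : j ∈ Icc (0 : ℤ) mx :=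
    by_contra fun h => hj.ne' (extZ_of_notMem h)
  have hstep (s s' : Fin (ms + 1)) (h : (s : ℕ) + 1 = s') :
      ∃ w ∈ W, 0 < diffKernel ms PX w s ∧ 0 < diffKernel ms PX w s' := by
    refine ⟨s - k, hW ?_, ?_, ?_⟩
    · have := hmem hk
      simp only [Finset.mem_Icc] at *
      omega
    · simpa [diffKernel] using hk
    · have hs' : (s' : ℕ) - ((s : ℕ) - k) = k + 1 := by omega
      rwa [diffKernel, of_apply, hs']
  refine (SimpleGraph.pathGraph_preconnected (ms + 1)).mono fun s s' h => ⟨h.ne, ?_⟩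
  exact (SimpleGraph.pathGraph_adj.1 h).imp (hstep s s') (hstep s' s)

lemma pr_sub_eq_diffKernel_mulVec (PX : Fin (mx + 1) → ℝ) (θ : Fin (ms + 1) → ℝ) (w : ℤ) :
    pr (fun ω : Fin (mx + 1) × Fin (ms + 1) => PX ω.1 * θ ω.2)
      (fun ω => ((ω.2 : ℕ) : ℤ) - ((ω.1 : ℕ) : ℤ)) w = (diffKernel ms PX *ᵥ θ) w := by
  rw [pr_eq_sum_ite, Fintype.sum_prod_type_right]
  refine Finset.sum_congr rfl fun s _ => ?_
  simp only [diffKernel, of_apply]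
  rw [extZ_eq_sum_ite, Finset.sum_mul]
  refine Finset.sum_congr rfl fun x _ => ?_
  rw [ite_mul, zero_mul]
  exact if_congr (by omega) rfl rfl

lemma iidMI_mul_log_two (hPX : IsPMF PX) (hθ : IsPMF θ) (hW : Icc (-mx : ℤ) ms ⊆ W) :
    iidMI mx ms PX θ * log 2 = entropyGain W (diffKernel ms PX) θ := by
  have hinj : Function.Injective fun ω : Fin (mx + 1) × Fin (ms + 1) =>
      (((ω.2 : ℕ) : ℤ) - ((ω.1 : ℕ) : ℤ), ω.1) := by
    rintro ⟨x, s⟩ ⟨x', s'⟩ h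
    obtain ⟨hs, rfl⟩ := Prod.ext_iff.1 h
    simpa [Fin.ext_iff] using hs
  have hX (x : Fin (mx + 1)) :
      pr (fun ω : Fin (mx + 1) × Fin (ms + 1) => PX ω.1 * θ ω.2) (fun ω => ω.1) x = PX x := by
    simp [pr_eq_sum_ite, Fintype.sum_prod_type, ← Finset.mul_sum, hθ.2]
  have hmem (ω : Fin (mx + 1) × Fin (ms + 1)) : ((ω.2 : ℕ) : ℤ) - ((ω.1 : ℕ) : ℤ) ∈ W :=
    hW (Finset.mem_Icc.2 (by omega))
  rw [iidMI, mutInfo, sub_mul, add_mul, ent_mul_log_two hmem,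
    ent_mul_log_two fun ω : Fin (mx + 1) × Fin (ms + 1) => mem_univ ω.1,
    ent_mul_log_two_of_injective hinj, sum_negMulLog_mul hPX.2 hθ.2, entropyGain]
  simp only [pr_sub_eq_diffKernel_mulVec, hX]
  ring

lemma iidMI_le_iidMI_iff (hPX : IsPMF PX) (hθ : IsPMF θ) (hφ : IsPMF φ)
    (hW : Icc (-mx : ℤ) ms ⊆ W) :
    iidMI mx ms PX θ ≤ iidMI mx ms PX φ ↔
      entropyGain W (diffKernel ms PX) θ ≤ entropyGain W (diffKernel ms PX) φ := by
  rw [← iidMI_mul_log_two hPX hθ hW, ← iidMI_mul_log_two hPX hφ hW,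
    mul_le_mul_iff_left₀ (log_pos one_lt_two)]

theorem eq_of_isMinOn_iidMI (hPX : IsPMF PX) (hadj : ∃ k, 0 < extZ PX k ∧ 0 < extZ PX (k + 1))
    (hθ : IsPMF θ) (hφ : IsPMF φ) (hmin : IsMinOn (iidMI mx ms PX) {θ | IsPMF θ} θ)
    (hle : iidMI mx ms PX φ ≤ iidMI mx ms PX θ) : φ = θ := by
  have hW := Finset.Subset.refl (Icc (-mx : ℤ) ms)
  have hminOn {ψ : Fin (ms + 1) → ℝ} (hψ : IsPMF ψ) (h : iidMI mx ms PX ψ ≤ iidMI mx ms PX θ) :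
      IsMinOn (entropyGain (Icc (-mx : ℤ) ms) (diffKernel ms PX)) {θ | IsPMF θ} ψ :=
    isMinOn_iff.2 fun η hη =>
      (iidMI_le_iidMI_iff hPX hψ hη hW).1 (h.trans (isMinOn_iff.1 hmin η hη))
  exact eq_of_isMinOn_entropyGain (isChannel_diffKernel hPX hW)
    (preconnected_confusabilityGraph_diffKernel hW hadj) hφ hθ (hminOn hφ hle)
    (hminOn hθ le_rfl)

lemma isPMF_comp_rev (hθ : IsPMF θ) : IsPMF (θ ∘ Fin.rev) :=
  ⟨fun s => hθ.1 s.rev, (Equiv.sum_comp Fin.revPerm θ).trans hθ.2⟩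

lemma iidMI_comp_rev_le (hPX : IsPMF PX) (hθ : IsPMF θ)
    (hsymm : ∀ k, extZ PX (c - k) = extZ PX k) :
    iidMI mx ms PX (θ ∘ Fin.rev) ≤ iidMI mx ms PX θ := by
  obtain ⟨W, hW, hinv⟩ := exists_reflect_invariant_superset (-mx) ms (ms - c)
  refine (iidMI_le_iidMI_iff hPX (isPMF_comp_rev hθ) hθ hW).2 (le_of_eq ?_)
  refine entropyGain_comp_equiv (e := Fin.revPerm) (τ := Equiv.subLeft (ms - c))
    (fun w => ⟨hinv w, fun h => by simpa using hinv _ h⟩) (fun w s => ?_) θ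
  rw [diffKernel, of_apply, of_apply, ← hsymm]
  congr 1
  simp only [Fin.revPerm_apply, Fin.val_rev, Equiv.subLeft_apply]
  omega

lemma extZ_reflect_of_isMinOn (hPX : IsPMF PX) (hsymm : ∀ k, extZ PX (c - k) = extZ PX k)
    (hadj : ∃ k, 0 < extZ PX k ∧ 0 < extZ PX (k + 1)) (hθ : IsPMF θ)
    (hmin : IsMinOn (iidMI mx ms PX) {θ | IsPMF θ} θ) (k : ℤ) : extZ θ (ms - k) = extZ θ k := by
  have hrev := eq_of_isMinOn_iidMI hPX hadj hθ (isPMF_comp_rev hθ) hmin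
    (iidMI_comp_rev_le hPX hθ hsymm)
  rw [← extZ_comp_rev, hrev]

/-- The polarization about `C / 2` of a function on `{0, …, ms}`. For nonnegative functions and
`ms ≤ C` no mass leaves `{0, …, ms}`, so that it maps pmfs to pmfs. -/
noncomputable def polarizeFin (C : ℤ) (θ : Fin (ms + 1) → ℝ) (s : Fin (ms + 1)) : ℝ :=
  polarize C (extZ θ) (s : ℕ)

lemma extZ_polarizeFin (hC : ms ≤ C) (hθ : ∀ s, 0 ≤ θ s) :
    extZ (polarizeFin C θ) = polarize C (extZ θ) := by
  refine extZ_restrict fun k hk => ?_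
  rw [polarize, extZ_of_notMem hk]
  split_ifs with hkC
  · rw [extZ_of_notMem (by simp only [Finset.mem_Icc] at *; omega), max_self]
  · exact min_eq_left (extZ_nonneg hθ _)

lemma isPMF_polarizeFin (hC : ms ≤ C) (hθ : IsPMF θ) : IsPMF (polarizeFin C θ) := by
  refine ⟨fun s => polarize_nonneg (extZ_nonneg hθ.1) _, ?_⟩
  obtain ⟨A, hA, hinv⟩ := exists_reflect_invariant_superset 0 ms C
  have hmass (ψ : Fin (ms + 1) → ℝ) := sum_extZ hA ψ (g := fun _ x => x) fun _ => rfl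
  rw [← hmass, extZ_polarizeFin hC hθ.1, sum_map_polarize hinv fun x => x, hmass, hθ.2]

lemma iidMI_polarizeFin_le (hPX : IsPMF PX) (hunimodal : SymmUnimodal c (extZ PX)) (hC : ms ≤ C)
    (hθ : IsPMF θ) : iidMI mx ms PX (polarizeFin C θ) ≤ iidMI mx ms PX θ := by
  obtain ⟨A, hA, hAinv⟩ := exists_reflect_invariant_superset 0 ms C
  obtain ⟨W, hW, hWinv⟩ := exists_reflect_invariant_superset (-mx) ms (C - c)
  have hin (ψ : Fin (ms + 1) → ℝ) :=
    sum_extZ hA ψ (g := fun _ => negMulLog) fun _ => negMulLog_zero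
  rw [iidMI_le_iidMI_iff hPX (isPMF_polarizeFin hC hθ) hθ hW, entropyGain, entropyGain, ← hin,
    ← hin, extZ_polarizeFin hC hθ.1, sum_map_polarize hAinv]
  simp only [diffKernel_mulVec hA, extZ_polarizeFin hC hθ.1]
  exact sub_le_sub_right (sum_map_sum_mul_polarize_le concaveOn_negMulLog (extZ_nonneg hPX.1)
    hunimodal (extZ_nonneg hθ.1) hAinv hWinv) _

lemma extZ_le_extZ_of_isMinOn (hPX : IsPMF PX) (hunimodal : SymmUnimodal c (extZ PX))
    (hadj : ∃ k, 0 < extZ PX k ∧ 0 < extZ PX (k + 1)) (hθ : IsPMF θ)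
    (hmin : IsMinOn (iidMI mx ms PX) {θ | IsPMF θ} θ) {k l : ℤ} (hkl : k ≤ l)
    (hms : ms ≤ k + l) : extZ θ l ≤ extZ θ k := by
  have hpol := eq_of_isMinOn_iidMI hPX hadj hθ (isPMF_polarizeFin hms hθ) hmin
    (iidMI_polarizeFin_le hPX hunimodal hms hθ)
  calc extZ θ l ≤ polarize (k + l) (extZ θ) k := by
        rw [polarize_of_le (by omega), add_sub_cancel_left]
        exact le_max_right _ _
    _ = extZ θ k := by rw [← extZ_polarizeFin hms hθ.1, hpol]

end Difference

theorem minimizer_almost_symmetric_unimodal_general {PX : Fin (mx + 1) → ℝ}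
    {θs : Fin (ms + 1) → ℝ} {c : ℤ} (hPX : IsPMF PX) (hunimodal : SymmUnimodal c (extZ PX))
    (hadj : ∃ k, 0 < extZ PX k ∧ 0 < extZ PX (k + 1)) (hθs : IsPMF θs)
    (hmin : IsMinOn (iidMI mx ms PX) {θ | IsPMF θ} θs) : SymmUnimodal ms (extZ θs) :=
  symmUnimodal_of_reflect_eq_of_le
    (extZ_reflect_of_isMinOn (c := c) hPX (fun k => hunimodal.eq (by omega)) hadj hθs hmin)
    (fun _ _ => extZ_le_extZ_of_isMinOn hPX hunimodal hadj hθs hmin)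

/-- If the fully supported pmf `P_X` on `𝒳` is symmetric and unimodal
around `c = ⌊m_x/2⌋` (with out-of-range values read as `0`), then any minimizer `θ*` of
`θ ↦ I(S - X; X)` over pmfs on `𝒮` is *almost* symmetric and unimodal around
`m* = ⌊m_s/2⌋`: if `m_s` is even, `θ*(m*) ≥ θ*(m*+1) = θ*(m*-1) ≥ θ*(m*+2) = θ*(m*-2) ≥ …`,
and if `m_s` is odd, `θ*(m*) = θ*(m*+1) ≥ θ*(m*-1) = θ*(m*+2) ≥ θ*(m*-2) = …`. -/
theorem minimizer_almost_symmetric_unimodal (mx ms : ℕ) (hmx : 1 ≤ mx)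
    (PX : Fin (mx + 1) → ℝ) (hPX : IsPMF PX) (hpos : ∀ x, 0 < PX x)
    (hsym : ∀ k : ℕ, extZ PX (((mx / 2 : ℕ) : ℤ) + k) = extZ PX (((mx / 2 : ℕ) : ℤ) - k))
    (hmono : ∀ k : ℕ,
      extZ PX (((mx / 2 : ℕ) : ℤ) + k + 1) ≤ extZ PX (((mx / 2 : ℕ) : ℤ) + k))
    (θs : Fin (ms + 1) → ℝ) (hθs : IsPMF θs)
    (hmin : ∀ θ : Fin (ms + 1) → ℝ, IsPMF θ → iidMI mx ms PX θs ≤ iidMI mx ms PX θ) :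
    (Even ms →
      (∀ k : ℕ, extZ θs (((ms / 2 : ℕ) : ℤ) + k) = extZ θs (((ms / 2 : ℕ) : ℤ) - k)) ∧
      (∀ k : ℕ,
        extZ θs (((ms / 2 : ℕ) : ℤ) + k + 1) ≤ extZ θs (((ms / 2 : ℕ) : ℤ) + k))) ∧
    (Odd ms →
      (∀ k : ℕ, extZ θs (((ms / 2 : ℕ) : ℤ) + k + 1) = extZ θs (((ms / 2 : ℕ) : ℤ) - k)) ∧
      (∀ k : ℕ,
        extZ θs (((ms / 2 : ℕ) : ℤ) - k - 1) ≤ extZ θs (((ms / 2 : ℕ) : ℤ) - k))) := by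
  have hadj : ∃ k, 0 < extZ PX k ∧ 0 < extZ PX (k + 1) :=
    ⟨0, extZ_pos hpos le_rfl (by omega), extZ_pos hpos (by omega) (by omega)⟩
  have hθ : SymmUnimodal ms (extZ θs) :=
    minimizer_almost_symmetric_unimodal_general hPX (symmUnimodal_two_mul hsym hmono) hadj hθs hmin
  exact ⟨fun ⟨m, hm⟩ => ⟨fun k => hθ.eq (by omega), fun k => hθ (by omega)⟩,
    fun ⟨m, hm⟩ => ⟨fun k => hθ.eq (by omega), fun k => hθ (by omega)⟩⟩

end SmartMeter
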